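/- Let D be a quotient-closed lattice, whose members are all regular languages, closed under concatenation, and let ρ : 2^{A*} → R be a multiplicative rating map. Then there exists a rating map τ : 2^{A*} → 2^R such that (1) τ is quasi-multiplicative for the endomorphism U ↦ ↓_R U of (2^R, ∪), and (2) τ(K) = I_{Bool(D)}[K, ρ] for every K ∈ D. -/

import Mathlib

open Set

namespace Paper

abbrev Lang (A : Type) := Set (List A)
abbrev LClass (A : Type) := Set (Set (List A))

variable {A R M : Type}

/-- A lattice of languages: contains `∅` and `A*`, closed under finite union
and finite intersection. -/
def LangLattice (𝒞 : LClass A) : Prop :=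
  (∅ : Lang A) ∈ 𝒞 ∧ (Set.univ : Lang A) ∈ 𝒞 ∧
    (∀ K L : Lang A, K ∈ 𝒞 → L ∈ 𝒞 → K ∪ L ∈ 𝒞) ∧
    (∀ K L : Lang A, K ∈ 𝒞 → L ∈ 𝒞 → K ∩ L ∈ 𝒞)

/-- A Boolean algebra of languages: a lattice closed under complement. -/
def LangBoolAlg (𝒞 : LClass A) : Prop :=
  LangLattice 𝒞 ∧ ∀ L : Lang A, L ∈ 𝒞 → Lᶜ ∈ 𝒞

/-- A class is quotient-closed when it is closed under left and right quotients
by words. -/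
def QuotientClosed (𝒞 : LClass A) : Prop :=
  ∀ L ∈ 𝒞, ∀ w : List A,
    {u : List A | w ++ u ∈ L} ∈ 𝒞 ∧ {u : List A | u ++ w ∈ L} ∈ 𝒞

/-- The canonical preorder `≤_𝒞` associated with a class `𝒞`. -/
def cle (𝒞 : LClass A) (w w' : List A) : Prop := ∀ L ∈ 𝒞, w ∈ L → w' ∈ L

/-- The canonical equivalence `∼_𝒞` associated with a class `𝒞`. -/
def ceq (𝒞 : LClass A) (w w' : List A) : Prop := ∀ L ∈ 𝒞, (w ∈ L ↔ w' ∈ L)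

/-- The `∼_𝒞`-class of the word `w`. -/
def cclass (𝒞 : LClass A) (w : List A) : Lang A := {v | ceq 𝒞 w v}

/-- `D` is a `∼_𝒞`-class. -/
def IsCClass (𝒞 : LClass A) (D : Lang A) : Prop := ∃ w : List A, D = cclass 𝒞 w

/-- Multiplication of `∼_𝒞`-classes (the class of the concatenation of
representatives). -/
def cmul (𝒞 : LClass A) (D E : Lang A) : Lang A :=
  {x | ∃ u ∈ D, ∃ v ∈ E, ceq 𝒞 (u ++ v) x}

/-- Language concatenation. -/
def cat (K L : Lang A) : Lang A := {w | ∃ u ∈ K, ∃ v ∈ L, u ++ v = w}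

/-- Marked concatenation `K a L`. -/
def mcat (K : Lang A) (a : A) (L : Lang A) : Lang A :=
  {w | ∃ u ∈ K, ∃ v ∈ L, u ++ a :: v = w}

/-- Boolean closure: the least Boolean algebra containing `𝒞`. -/
def BoolC (𝒞 : LClass A) : LClass A := ⋂₀ {𝒟 : LClass A | LangBoolAlg 𝒟 ∧ 𝒞 ⊆ 𝒟}

/-- Polynomial closure: the least class containing `𝒞` closed under union and
marked concatenation. -/
def PolC (𝒞 : LClass A) : LClass A :=
  ⋂₀ {𝒟 : LClass A | 𝒞 ⊆ 𝒟 ∧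
    (∀ K L : Lang A, K ∈ 𝒟 → L ∈ 𝒟 → K ∪ L ∈ 𝒟) ∧
    (∀ (K L : Lang A) (a : A), K ∈ 𝒟 → L ∈ 𝒟 → mcat K a L ∈ 𝒟)}

/-- A cover of `L`: a finite set of languages whose union includes `L`. -/
def IsCover (Ks : LClass A) (L : Lang A) : Prop := Ks.Finite ∧ L ⊆ ⋃₀ Ks

/-- A `𝒞`-cover of `L`: a cover all of whose members belong to `𝒞`. -/
def IsCCover (𝒞 Ks : LClass A) (L : Lang A) : Prop := IsCover Ks L ∧ Ks ⊆ 𝒞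

/-- `α : A* → M` is a monoid morphism. -/
def IsMonoidMorphism [Monoid M] (α : List A → M) : Prop :=
  α [] = 1 ∧ ∀ u v : List A, α (u ++ v) = α u * α v

/-- `α` recognizes `L`. -/
def Recognizes [Monoid M] (α : List A → M) (L : Lang A) : Prop :=
  ∃ F : Set M, L = α ⁻¹' F

/-- A language is regular when it is recognized by a monoid morphism into a
finite monoid. -/
def RegularLang (L : Lang A) : Prop :=
  ∃ (N : Type) (_ : Monoid N) (_ : Finite N) (α : List A → N),
    IsMonoidMorphism α ∧ Recognizes α L

/-- The canonical order on a rating set: `r ≤ s` iff `r + s = s`. -/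
def rle [Add R] (r s : R) : Prop := r + s = s

/-- A rating map: maps `∅` to `0` and commutes with binary union. -/
def IsRatingMap [AddCommMonoid R] (ρ : Lang A → R) : Prop :=
  ρ ∅ = 0 ∧ ∀ K L : Lang A, ρ (K ∪ L) = ρ K + ρ L

/-- A nice rating map: the value of any language is a finite sum of values of
its words. -/
def IsNice [AddCommMonoid R] (ρ : Lang A → R) : Prop :=
  ∀ K : Lang A, ∃ l : List (List A), (∀ w ∈ l, w ∈ K) ∧
    ρ K = (l.map fun w => ρ {w}).sum

/-- A multiplicative rating map: also a morphism for concatenation. -/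
def IsMultiplicative [Semiring R] (ρ : Lang A → R) : Prop :=
  ρ ({[]} : Lang A) = 1 ∧ ∀ K L : Lang A, ρ (cat K L) = ρ K * ρ L

/-- An endomorphism of the additive monoid `(R, +)`. -/
def IsAddEndo [AddCommMonoid R] (γ : R → R) : Prop :=
  γ 0 = 0 ∧ ∀ r s : R, γ (r + s) = γ r + γ s

/-- A quasi-multiplicative rating map for the endomorphism `γ`. -/
def IsQuasiMult [Semiring R] (ρ : Lang A → R) (γ : R → R) : Prop :=
  IsAddEndo γ ∧ (∀ q r s : R, γ (q * γ r * s) = γ (q * r * s)) ∧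
    ∀ K L : Lang A, ρ (cat K L) = γ (ρ K * ρ L)

/-- The `ρ`-imprint of a set of languages. -/
def imprint [Add R] (ρ : Lang A → R) (Ks : LClass A) : Set R :=
  {r | ∃ K ∈ Ks, rle r (ρ K)}

/-- The `𝒟`-optimal `ρ`-imprint on `L` (the imprint of any optimal `𝒟`-cover
of `L`, i.e. the intersection of the imprints of all `𝒟`-covers of `L`). -/
def optImprint [Add R] (𝒟 : LClass A) (ρ : Lang A → R) (L : Lang A) : Set R :=
  {r | ∀ Ks : LClass A, IsCCover 𝒟 Ks L → r ∈ imprint ρ Ks}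

/-- Downset operation on subsets of a rating set. -/
def dclos [Add R] (U : Set R) : Set R := {r | ∃ s ∈ U, rle r s}

/-- Pointwise multiplication of subsets of a rating set. -/
def smul [Mul R] (U V : Set R) : Set R := {x | ∃ u ∈ U, ∃ v ∈ V, u * v = x}

/-!
On all languages, `K ↦ I_{Bool(𝒟)}[K, ρ]` is monotone and compatible with union, and
`↓(I[K] · I[L]) ⊆ I[KL]`. The reverse inclusion holds for `K, L ∈ 𝒟`. Fix a finite `F ⊆ 𝒟` and
let `↑u` be the set of words above `u` for `≤_F`; it belongs to `𝒟`. Cover `KL` by the classes of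
words that no language `↑u ↑v ∈ 𝒟` distinguishes. Among the factorizations `w = uv`, choose one
whose factors are maximal for `≤_F`: if `w'` is in the class of `w`, then `w' = xy` with
`u ≤ x` and `v ≤ y`, and in turn `w = x'y'` with `x ≤ x'` and `y ≤ y'`, so that maximality forces
`u ∼ x` and `v ∼ y`. Each class thus lies in a product of two `∼_F`-classes, and for `F` fine
enough the ratings of `∼_F`-classes belong to the optimal imprints.

The map `τ` is the extension of the optimal imprint from `𝒟` to all languages by approximation
from above. It remains multiplicative because, by residuation, `K₁K₂ ⊆ L ∈ 𝒟` implies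
`H₁H₂ ⊆ L` for some `H₁ ⊇ K₁` and `H₂ ⊇ K₂` in `𝒟`.
-/

/-! ### Lattices, Boolean closure and regular languages -/

theorem LangLattice.sInter_mem {𝒞 : LClass A} (h𝒞 : LangLattice 𝒞) {S : LClass A}
    (hfin : S.Finite) (hS : S ⊆ 𝒞) : ⋂₀ S ∈ 𝒞 := by
  induction S, hfin using Set.Finite.induction_on with
  | empty => simpa using h𝒞.2.1
  | insert _ _ ih =>
    rw [Set.sInter_insert]
    exact h𝒞.2.2.2 _ _ (hS (Set.mem_insert _ _)) (ih ((Set.subset_insert _ _).trans hS))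

theorem LangBoolAlg.of_union_compl {ℬ : LClass A} (hempty : ∅ ∈ ℬ)
    (hunion : ∀ K L : Lang A, K ∈ ℬ → L ∈ ℬ → K ∪ L ∈ ℬ)
    (hcompl : ∀ L : Lang A, L ∈ ℬ → Lᶜ ∈ ℬ) : LangBoolAlg ℬ := by
  refine ⟨⟨hempty, ?_, hunion, fun K L hK hL => ?_⟩, hcompl⟩
  · simpa using hcompl _ hempty
  · simpa [Set.compl_union] using hcompl _ (hunion _ _ (hcompl _ hK) (hcompl _ hL))

theorem langBoolAlg_boolC (𝒟 : LClass A) : LangBoolAlg (BoolC 𝒟) :=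
  .of_union_compl (fun _ hℬ => hℬ.1.1.1)
    (fun _ _ hK hL ℬ hℬ => hℬ.1.1.2.2.1 _ _ (hK ℬ hℬ) (hL ℬ hℬ))
    (fun _ hL ℬ hℬ => hℬ.1.2 _ (hL ℬ hℬ))

theorem subset_boolC (𝒟 : LClass A) : 𝒟 ⊆ BoolC 𝒟 := fun _ hL _ hℬ => hℬ.2 hL

theorem boolC_subset {𝒟 ℬ : LClass A} (hℬ : LangBoolAlg ℬ) (h : 𝒟 ⊆ ℬ) : BoolC 𝒟 ⊆ ℬ :=
  Set.sInter_subset_of_mem ⟨hℬ, h⟩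

theorem QuotientClosed.boolC {𝒟 : LClass A} (hqc : QuotientClosed 𝒟) :
    QuotientClosed (BoolC 𝒟) := by
  have hB := langBoolAlg_boolC 𝒟
  refine boolC_subset (ℬ := {L | ∀ w : List A,
    {u | w ++ u ∈ L} ∈ BoolC 𝒟 ∧ {u | u ++ w ∈ L} ∈ BoolC 𝒟}) (.of_union_compl ?_ ?_ ?_) ?_
  · exact fun _ => ⟨hB.1.1, hB.1.1⟩
  · exact fun K L hK hL w =>
      ⟨hB.1.2.2.1 _ _ (hK w).1 (hL w).1, hB.1.2.2.1 _ _ (hK w).2 (hL w).2⟩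
  · exact fun L hL w => ⟨hB.2 _ (hL w).1, hB.2 _ (hL w).2⟩
  · exact fun L hL w => (hqc L hL w).imp (subset_boolC 𝒟 ·) (subset_boolC 𝒟 ·)

theorem RegularLang.compl {L : Lang A} (hL : RegularLang L) : RegularLang Lᶜ := by
  obtain ⟨N, hN, hfin, α, hα, S, rfl⟩ := hL
  exact ⟨N, hN, hfin, α, hα, Sᶜ, rfl⟩

theorem RegularLang.union {K L : Lang A} (hK : RegularLang K) (hL : RegularLang L) :
    RegularLang (K ∪ L) := by
  obtain ⟨M, _, _, α, hα, S, rfl⟩ := hK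
  obtain ⟨N, _, _, β, hβ, T, rfl⟩ := hL
  refine ⟨M × N, inferInstance, inferInstance, fun w => (α w, β w), ⟨?_, fun u v => ?_⟩,
    {p | p.1 ∈ S ∨ p.2 ∈ T}, rfl⟩
  · exact Prod.ext hα.1 hβ.1
  · exact Prod.ext (hα.2 u v) (hβ.2 u v)

theorem regularLang_empty : RegularLang (∅ : Lang A) :=
  ⟨Unit, inferInstance, inferInstance, fun _ => 1, ⟨rfl, fun _ _ => rfl⟩, ∅, rfl⟩

theorem RegularLang.of_mem_boolC {𝒟 : LClass A} (hreg : ∀ L ∈ 𝒟, RegularLang L) {L : Lang A}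
    (hL : L ∈ BoolC 𝒟) : RegularLang L :=
  boolC_subset (ℬ := {L | RegularLang L})
    (.of_union_compl regularLang_empty (fun _ _ => .union) fun _ => .compl) hreg hL

theorem RegularLang.finite_range_leftQuotient {L : Lang A} (hL : RegularLang L) :
    (Set.range fun w : List A => {u : List A | w ++ u ∈ L}).Finite := by
  obtain ⟨N, _, _, α, hα, S, rfl⟩ := hL
  refine (Set.finite_range fun n : N => {u : List A | n * α u ∈ S}).subset ?_
  rintro _ ⟨w, rfl⟩
  exact ⟨α w, by simp only [Set.mem_preimage, hα.2]⟩

theorem RegularLang.finite_range_rightQuotient {L : Lang A} (hL : RegularLang L) :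
    (Set.range fun w : List A => {u : List A | u ++ w ∈ L}).Finite := by
  obtain ⟨N, _, _, α, hα, S, rfl⟩ := hL
  refine (Set.finite_range fun n : N => {u : List A | α u * n ∈ S}).subset ?_
  rintro _ ⟨w, rfl⟩
  exact ⟨α w, by simp only [Set.mem_preimage, hα.2]⟩

section Residuation

variable {𝒟 : LClass A} {L : Lang A}

theorem leftResidual_mem (hlat : LangLattice 𝒟) (hqc : QuotientClosed 𝒟) (hL : L ∈ 𝒟)
    (hreg : RegularLang L) (K : Lang A) : {v | ∀ u ∈ K, u ++ v ∈ L} ∈ 𝒟 := by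
  have hinter : {v | ∀ u ∈ K, u ++ v ∈ L} = ⋂₀ ((fun u => {v | u ++ v ∈ L}) '' K) := by
    ext v; simp
  rw [hinter]
  refine hlat.sInter_mem (hreg.finite_range_leftQuotient.subset (Set.image_subset_range _ _)) ?_
  exact Set.image_subset_iff.2 fun u _ => (hqc L hL u).1

theorem rightResidual_mem (hlat : LangLattice 𝒟) (hqc : QuotientClosed 𝒟) (hL : L ∈ 𝒟)
    (hreg : RegularLang L) (K : Lang A) : {u | ∀ v ∈ K, u ++ v ∈ L} ∈ 𝒟 := by
  have hinter : {u | ∀ v ∈ K, u ++ v ∈ L} = ⋂₀ ((fun v => {u | u ++ v ∈ L}) '' K) := by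
    ext u; simp
  rw [hinter]
  refine hlat.sInter_mem (hreg.finite_range_rightQuotient.subset (Set.image_subset_range _ _)) ?_
  exact Set.image_subset_iff.2 fun v _ => (hqc L hL v).2

theorem exists_mem_cat_subset (hlat : LangLattice 𝒟) (hqc : QuotientClosed 𝒟) (hL : L ∈ 𝒟)
    (hreg : RegularLang L) {K₁ K₂ : Lang A} (h : cat K₁ K₂ ⊆ L) :
    ∃ H₁ ∈ 𝒟, ∃ H₂ ∈ 𝒟, K₁ ⊆ H₁ ∧ K₂ ⊆ H₂ ∧ cat H₁ H₂ ⊆ L :=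
  ⟨_, rightResidual_mem hlat hqc hL hreg K₂,
    _, leftResidual_mem hlat hqc hL hreg {u | ∀ v ∈ K₂, u ++ v ∈ L},
    fun u hu v hv => h ⟨u, hu, v, hv, rfl⟩, fun v hv _ hu => hu v hv,
    Set.image2_subset_iff.2 fun u hu _ hv => hv u hu⟩

end Residuation

/-! ### The canonical preorder -/

theorem cle.trans {𝒞 : LClass A} {u v w : List A} (huv : cle 𝒞 u v) (hvw : cle 𝒞 v w) :
    cle 𝒞 u w := fun L hL hu => hvw L hL (huv L hL hu)

/-- The set `↑w` of words above `w` for the canonical preorder `≤_𝒞`. For finite `𝒞`, these are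
the smallest intersections of members of `𝒞` that contain a given word. -/
def cupset (𝒞 : LClass A) (w : List A) : Lang A := {v | cle 𝒞 w v}

theorem mem_cupset_self (𝒞 : LClass A) (w : List A) : w ∈ cupset 𝒞 w := fun _ _ h => h

theorem cclass_anti {F G : LClass A} (h : F ⊆ G) (w : List A) : cclass G w ⊆ cclass F w :=
  fun _ hv L hL => hv L (h hL)

theorem cupset_eq_sInter (𝒞 : LClass A) (w : List A) :
    cupset 𝒞 w = ⋂₀ {L | L ∈ 𝒞 ∧ w ∈ L} := by
  ext v
  exact ⟨fun hv L hL => hv L hL.1 hL.2, fun hv L hL hw => hv L ⟨hL, hw⟩⟩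

theorem cclass_eq_cupset (𝒞 : LClass A) (w : List A) :
    cclass 𝒞 w = cupset (𝒞 ∪ compl '' 𝒞) w := by
  ext v
  constructor
  · rintro hv L (hL | ⟨K, hK, rfl⟩) hw
    · exact (hv L hL).1 hw
    · exact fun hvK => hw ((hv K hK).2 hvK)
  · refine fun hv L hL => ⟨hv L (Or.inl hL), fun hvL => ?_⟩
    by_contra hw
    exact hv Lᶜ (Or.inr ⟨L, hL, rfl⟩) hw hvL

theorem finite_range_cupset {F : LClass A} (hF : F.Finite) : (Set.range (cupset F)).Finite := by
  refine (hF.finite_subsets.image Set.sInter).subset ?_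
  rintro _ ⟨w, rfl⟩
  exact ⟨_, fun _ hL => hL.1, (cupset_eq_sInter F w).symm⟩

theorem LangLattice.cupset_mem {𝒞 : LClass A} (h𝒞 : LangLattice 𝒞) {F : LClass A}
    (hfin : F.Finite) (hF : F ⊆ 𝒞) (w : List A) : cupset F w ∈ 𝒞 := by
  rw [cupset_eq_sInter]
  exact h𝒞.sInter_mem (hfin.subset fun _ hL => hL.1) fun _ hL => hF hL.1

theorem LangLattice.isCCover_image_cupset {𝒞 : LClass A} (h𝒞 : LangLattice 𝒞) {F : LClass A}
    (hfin : F.Finite) (hF : F ⊆ 𝒞) (L : Lang A) : IsCCover 𝒞 (cupset F '' L) L :=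
  ⟨⟨(finite_range_cupset hfin).subset (Set.image_subset_range _ _),
    fun w hw => ⟨_, ⟨w, hw, rfl⟩, mem_cupset_self F w⟩⟩,
    Set.image_subset_iff.2 fun w _ => h𝒞.cupset_mem hfin hF w⟩

theorem LangBoolAlg.isCCover_image_cclass {ℬ : LClass A} (hℬ : LangBoolAlg ℬ) {F : LClass A}
    (hfin : F.Finite) (hF : F ⊆ ℬ) (L : Lang A) : IsCCover ℬ (cclass F '' L) L := by
  rw [funext (cclass_eq_cupset F)]
  exact hℬ.1.isCCover_image_cupset (hfin.union (hfin.image _))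
    (Set.union_subset hF (Set.image_subset_iff.2 fun K hK => hℬ.2 K (hF hK))) L

theorem exists_finite_cclass_subset_of_mem_boolC {𝒟 : LClass A} {L : Lang A}
    (hL : L ∈ BoolC 𝒟) :
    ∃ F : LClass A, F.Finite ∧ F ⊆ 𝒟 ∧ ∀ u ∈ L, cclass F u ⊆ L := by
  refine boolC_subset (ℬ := {L | ∃ F : LClass A, F.Finite ∧ F ⊆ 𝒟 ∧ ∀ u ∈ L, cclass F u ⊆ L})
    (.of_union_compl ?_ ?_ ?_) ?_ hL
  · exact ⟨∅, Set.finite_empty, Set.empty_subset _, fun _ hu => hu.elim⟩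
  · rintro K L ⟨F, hFfin, hF, hK⟩ ⟨G, hGfin, hG, hL⟩
    refine ⟨F ∪ G, hFfin.union hGfin, Set.union_subset hF hG, ?_⟩
    rintro u (hu | hu)
    · exact ((cclass_anti Set.subset_union_left u).trans (hK u hu)).trans Set.subset_union_left
    · exact ((cclass_anti Set.subset_union_right u).trans (hL u hu)).trans Set.subset_union_right
  · rintro L ⟨F, hFfin, hF, hL⟩
    exact ⟨F, hFfin, hF, fun u hu v hv hvL => hu (hL v hvL fun K hK => (hv K hK).symm)⟩
  · exact fun L hL => ⟨{L}, Set.finite_singleton L, Set.singleton_subset_iff.2 hL,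
      fun u hu v hv => (hv L rfl).1 hu⟩

theorem finite_setOf_append_eq (w : List A) :
    {p : List A × List A | p.1 ++ p.2 = w}.Finite := by
  refine ((Set.finite_Iic w.length).image fun n => (w.take n, w.drop n)).subset ?_
  rintro ⟨u, v⟩ rfl
  exact ⟨u.length, by simp, by simp⟩

/-- The languages `↑u ↑v`, where `↑u` is the upper set of the word `u` for `≤_F`. -/
def catCupsets (F : LClass A) : LClass A :=
  Set.image2 cat (Set.range (cupset F)) (Set.range (cupset F))

theorem cat_cupset_mem_catCupsets (F : LClass A) (u v : List A) :
    cat (cupset F u) (cupset F v) ∈ catCupsets F :=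
  Set.mem_image2_of_mem ⟨u, rfl⟩ ⟨v, rfl⟩

theorem append_mem_cat_cupset (F : LClass A) (u v : List A) :
    u ++ v ∈ cat (cupset F u) (cupset F v) :=
  ⟨u, mem_cupset_self F u, v, mem_cupset_self F v, rfl⟩

theorem exists_maximal_factorization (F : LClass A) (u₀ v₀ : List A) :
    ∃ u v : List A, u ++ v = u₀ ++ v₀ ∧ cle F u₀ u ∧ cle F v₀ v ∧
      ∀ x y : List A, x ++ y = u₀ ++ v₀ → cle F u x → cle F v y → cle F x u ∧ cle F y v := by
  let P : Set (List A × List A) := {p | p.1 ++ p.2 = u₀ ++ v₀ ∧ cle F u₀ p.1 ∧ cle F v₀ p.2}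
  let typ (w : List A) : LClass A := {L | L ∈ F ∧ w ∈ L}
  have cle_of_typ {x y : List A} (h : typ x ⊆ typ y) : cle F x y := fun L hL hx => (h ⟨hL, hx⟩).2
  have typ_of_cle {x y : List A} (h : cle F x y) : typ x ⊆ typ y :=
    fun L hL => ⟨hL.1, h L hL.1 hL.2⟩
  have hP : P.Finite := (finite_setOf_append_eq _).subset fun _ hp => hp.1
  obtain ⟨⟨u, v⟩, ⟨huv, hu, hv⟩, hmax⟩ := hP.exists_maximalFor (fun p => (typ p.1, typ p.2)) P
    ⟨(u₀, v₀), rfl, mem_cupset_self F u₀, mem_cupset_self F v₀⟩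
  refine ⟨u, v, huv, hu, hv, fun x y hxy hux hvy => ?_⟩
  obtain ⟨hxu, hyv⟩ := hmax (j := (x, y)) ⟨hxy, hu.trans hux, hv.trans hvy⟩
    ⟨typ_of_cle hux, typ_of_cle hvy⟩
  exact ⟨cle_of_typ hxu, cle_of_typ hyv⟩

theorem exists_cclass_catCupsets_subset (F : LClass A) (u₀ v₀ : List A) :
    ∃ u v : List A, cle F u₀ u ∧ cle F v₀ v ∧
      cclass (catCupsets F) (u₀ ++ v₀) ⊆ cat (cclass F u) (cclass F v) := by
  obtain ⟨u, v, huv, hu, hv, hmax⟩ := exists_maximal_factorization F u₀ v₀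
  refine ⟨u, v, hu, hv, fun w hw => ?_⟩
  obtain ⟨x, hux, y, hvy, rfl⟩ :=
    (hw _ (cat_cupset_mem_catCupsets F u v)).1 (huv ▸ append_mem_cat_cupset F u v)
  obtain ⟨x', hxx', y', hyy', hxy'⟩ :=
    (hw _ (cat_cupset_mem_catCupsets F x y)).2 (append_mem_cat_cupset F x y)
  obtain ⟨hx'u, hy'v⟩ := hmax x' y' hxy' (hux.trans hxx') (hvy.trans hyy')
  exact ⟨x, fun L hL => ⟨hux L hL, (hxx'.trans hx'u) L hL⟩,
    y, fun L hL => ⟨hvy L hL, (hyy'.trans hy'v) L hL⟩, rfl⟩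

/-! ### Rating sets and downsets -/

theorem rle.trans [AddSemigroup R] {r s t : R} (hrs : rle r s) (hst : rle s t) : rle r t := by
  unfold rle at *
  rw [← hst, ← add_assoc, hrs]

theorem rle.mul [NonUnitalNonAssocSemiring R] {r s t u : R} (hrs : rle r s) (htu : rle t u) :
    rle (r * t) (s * u) := by
  have hleft : rle (r * t) (r * u) := by unfold rle at *; rw [← mul_add, htu]
  have hright : rle (r * u) (s * u) := by unfold rle at *; rw [← add_mul, hrs]
  exact hleft.trans hright

theorem IsRatingMap.mono [AddCommMonoid R] {ρ : Lang A → R} (hρ : IsRatingMap ρ) {K L : Lang A}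
    (h : K ⊆ L) : rle (ρ K) (ρ L) := by
  rw [rle, ← hρ.2, Set.union_eq_self_of_subset_left h]

theorem dclos_mono [Add R] {U V : Set R} (h : U ⊆ V) : dclos U ⊆ dclos V :=
  fun _ ⟨s, hs, hrs⟩ => ⟨s, h hs, hrs⟩

theorem dclos_smul_smul_dclos [NonUnitalNonAssocSemiring R] (hidem : ∀ r : R, r + r = r)
    (T U V : Set R) : dclos (smul T (smul (dclos U) V)) = dclos (smul T (smul U V)) := by
  apply Set.Subset.antisymm
  · rintro r ⟨_, ⟨t, ht, _, ⟨u', ⟨u, hu, hu'⟩, v, hv, rfl⟩, rfl⟩, hr⟩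
    exact ⟨_, ⟨t, ht, _, ⟨u, hu, v, hv, rfl⟩, rfl⟩,
      hr.trans (rle.mul (hidem t) (hu'.mul (hidem v)))⟩
  · have hU : U ⊆ dclos U := fun u hu => ⟨u, hu, hidem u⟩
    exact dclos_mono (Set.image2_subset_left (Set.image2_subset_right hU))

/-! ### Optimal imprints -/

theorem optImprint_mono [Add R] (𝒞 : LClass A) (ρ : Lang A → R) : Monotone (optImprint 𝒞 ρ) :=
  fun _ _ h _ hr Ks hKs => hr Ks ⟨⟨hKs.1.1, h.trans hKs.1.2⟩, hKs.2⟩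

theorem optImprint_empty [Add R] (𝒞 : LClass A) (ρ : Lang A → R) : optImprint 𝒞 ρ ∅ = ∅ := by
  refine Set.eq_empty_of_forall_notMem fun r hr => ?_
  obtain ⟨K, hK, -⟩ := hr ∅ ⟨⟨Set.finite_empty, Set.empty_subset _⟩, Set.empty_subset _⟩
  exact hK

theorem IsCCover.union {𝒞 Ks Ls : LClass A} {K L : Lang A} (hKs : IsCCover 𝒞 Ks K)
    (hLs : IsCCover 𝒞 Ls L) : IsCCover 𝒞 (Ks ∪ Ls) (K ∪ L) :=
  ⟨⟨hKs.1.1.union hLs.1.1, Set.sUnion_union Ks Ls ▸ Set.union_subset_union hKs.1.2 hLs.1.2⟩,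
    Set.union_subset hKs.2 hLs.2⟩

theorem optImprint_union_subset [Add R] (𝒞 : LClass A) (ρ : Lang A → R) (K L : Lang A) :
    optImprint 𝒞 ρ (K ∪ L) ⊆ optImprint 𝒞 ρ K ∪ optImprint 𝒞 ρ L := by
  intro r hr
  by_contra! hne
  simp only [Set.mem_union, not_or, optImprint, Set.mem_ofPred_eq, not_forall] at hne
  obtain ⟨⟨Ks, hKs, hrKs⟩, Ls, hLs, hrLs⟩ := hne
  obtain ⟨H, hH | hH, hrH⟩ := hr _ (hKs.union hLs)
  · exact hrKs ⟨H, hH, hrH⟩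
  · exact hrLs ⟨H, hH, hrH⟩

theorem mem_optImprint_of_rle [AddSemigroup R] {𝒞 : LClass A} {ρ : Lang A → R} {L : Lang A}
    {r s : R} (hrs : rle r s) (hs : s ∈ optImprint 𝒞 ρ L) : r ∈ optImprint 𝒞 ρ L := by
  intro Ks hKs
  obtain ⟨K, hK, hsK⟩ := hs Ks hKs
  exact ⟨K, hK, hrs.trans hsK⟩

theorem exists_optimal_isCCover [AddCommMonoid R] [Finite R] {𝒞 : LClass A}
    (h𝒞 : LangLattice 𝒞) {ρ : Lang A → R} (hρ : IsRatingMap ρ) (L : Lang A) :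
    ∃ Ks : LClass A, IsCCover 𝒞 Ks L ∧ imprint ρ Ks ⊆ optImprint 𝒞 ρ L := by
  have hsep (r : R) :
      ∃ Ks : LClass A, IsCCover 𝒞 Ks L ∧ (r ∈ imprint ρ Ks → r ∈ optImprint 𝒞 ρ L) := by
    by_cases hr : r ∈ optImprint 𝒞 ρ L
    · exact ⟨_, h𝒞.isCCover_image_cupset Set.finite_empty (Set.empty_subset _) L, fun _ => hr⟩
    · obtain ⟨Ks, hKs, hrKs⟩ := by
        simpa only [optImprint, Set.mem_ofPred_eq, not_forall] using hr
      exact ⟨Ks, hKs, fun h => absurd h hrKs⟩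
  choose Ks hKs hopt using hsep
  refine ⟨_, h𝒞.isCCover_image_cupset (F := ⋃ r, Ks r) (Set.finite_iUnion fun r => (hKs r).1.1)
    (Set.iUnion_subset fun r => (hKs r).2) L, ?_⟩
  rintro r ⟨_, ⟨u, hu, rfl⟩, hru⟩
  obtain ⟨K, hK, huK⟩ := (hKs r).1.2 hu
  have hsub : cupset (⋃ r, Ks r) u ⊆ K := fun v hv => hv K (Set.mem_iUnion_of_mem r hK) huK
  exact hopt r ⟨K, hK, hru.trans (hρ.mono hsub)⟩

theorem exists_finite_rating_cclass_mem_optImprint [AddCommMonoid R] [Finite R]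
    (hidem : ∀ r : R, r + r = r) (𝒟 : LClass A) {ρ : Lang A → R} (hρ : IsRatingMap ρ)
    (L : Lang A) :
    ∃ F : LClass A, F.Finite ∧ F ⊆ 𝒟 ∧
      ∀ G, F ⊆ G → ∀ u ∈ L, ρ (cclass G u) ∈ optImprint (BoolC 𝒟) ρ L := by
  obtain ⟨Ks, hKs, hopt⟩ := exists_optimal_isCCover (langBoolAlg_boolC 𝒟).1 hρ L
  choose! F hfin hF hsat using
    fun K (hK : K ∈ Ks) => exists_finite_cclass_subset_of_mem_boolC (hKs.2 hK)
  refine ⟨⋃ K ∈ Ks, F K, hKs.1.1.biUnion hfin, Set.iUnion₂_subset hF, fun G hG u hu => ?_⟩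
  obtain ⟨K, hK, huK⟩ := hKs.1.2 hu
  have hFG : F K ⊆ G := (Set.subset_biUnion_of_mem hK).trans hG
  have hGK : cclass G u ⊆ K := (cclass_anti hFG u).trans (hsat K hK u huK)
  exact mem_optImprint_of_rle (hρ.mono hGK) (hopt ⟨K, hK, hidem _⟩)

section Concatenation

variable [Semiring R] {ρ : Lang A → R}

theorem IsCCover.leftQuotient {𝒞 Ks : LClass A} (hqc : QuotientClosed 𝒞) {L : Lang A}
    (hKs : IsCCover 𝒞 Ks L) (u : List A) :
    IsCCover 𝒞 ((fun K => {v | u ++ v ∈ K}) '' Ks) {v | u ++ v ∈ L} := by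
  refine ⟨⟨hKs.1.1.image _, fun v hv => ?_⟩,
    Set.image_subset_iff.2 fun K hK => (hqc K (hKs.2 hK) u).1⟩
  obtain ⟨K, hK, huv⟩ := hKs.1.2 hv
  exact ⟨_, ⟨K, hK, rfl⟩, huv⟩

theorem exists_finite_cat_cupset_leftQuotient_subset {𝒞 Ks : LClass A} (hqc : QuotientClosed 𝒞)
    (hreg : ∀ L ∈ 𝒞, RegularLang L) (hfin : Ks.Finite) (hKs : Ks ⊆ 𝒞) :
    ∃ F : LClass A, F.Finite ∧ F ⊆ 𝒞 ∧
      ∀ K ∈ Ks, ∀ u, cat (cupset F u) {v | u ++ v ∈ K} ⊆ K := by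
  refine ⟨⋃ K ∈ Ks, Set.range fun w => {u | u ++ w ∈ K},
    hfin.biUnion fun K hK => (hreg K (hKs hK)).finite_range_rightQuotient,
    Set.iUnion₂_subset fun K hK => Set.range_subset_iff.2 fun w => (hqc K (hKs hK) w).2, ?_⟩
  rintro K hK u _ ⟨x, hx, v, hv, rfl⟩
  exact hx {u | u ++ v ∈ K} (Set.mem_biUnion hK ⟨v, rfl⟩) hv

theorem mul_mem_optImprint_cat {𝒞 : LClass A} (hlat : LangLattice 𝒞) (hqc : QuotientClosed 𝒞)
    (hreg : ∀ L ∈ 𝒞, RegularLang L) (hρ : IsRatingMap ρ) (hmult : IsMultiplicative ρ)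
    {K L : Lang A} {r s : R} (hr : r ∈ optImprint 𝒞 ρ K) (hs : s ∈ optImprint 𝒞 ρ L) :
    r * s ∈ optImprint 𝒞 ρ (cat K L) := by
  intro Hs hHs
  obtain ⟨F, hfin, hF, hcat⟩ :=
    exists_finite_cat_cupset_leftQuotient_subset hqc hreg hHs.1.1 hHs.2
  obtain ⟨_, ⟨u, hu, rfl⟩, hru⟩ := hr _ (hlat.isCCover_image_cupset hfin hF K)
  have hL : L ⊆ {v | u ++ v ∈ cat K L} := fun v hv => ⟨u, hu, v, hv, rfl⟩
  obtain ⟨_, ⟨H, hH, rfl⟩, hsH⟩ := optImprint_mono 𝒞 ρ hL hs _ (hHs.leftQuotient hqc u)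
  refine ⟨H, hH, (hru.mul hsH).trans ?_⟩
  rw [← hmult.2]
  exact hρ.mono (hcat H hH u)

theorem LangLattice.catCupsets_subset {𝒟 : LClass A} (hlat : LangLattice 𝒟)
    (hcat : ∀ K L : Lang A, K ∈ 𝒟 → L ∈ 𝒟 → cat K L ∈ 𝒟) {F : LClass A} (hfin : F.Finite)
    (hF : F ⊆ 𝒟) : catCupsets F ⊆ 𝒟 := by
  rintro _ ⟨_, ⟨u, rfl⟩, _, ⟨v, rfl⟩, rfl⟩
  exact hcat _ _ (hlat.cupset_mem hfin hF u) (hlat.cupset_mem hfin hF v)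

theorem optImprint_boolC_cat_subset [Finite R] (hidem : ∀ r : R, r + r = r) {𝒟 : LClass A}
    (hlat : LangLattice 𝒟) (hcat : ∀ K L : Lang A, K ∈ 𝒟 → L ∈ 𝒟 → cat K L ∈ 𝒟)
    (hρ : IsRatingMap ρ) (hmult : IsMultiplicative ρ) {K L : Lang A} (hK : K ∈ 𝒟) (hL : L ∈ 𝒟) :
    optImprint (BoolC 𝒟) ρ (cat K L) ⊆
      dclos (smul (optImprint (BoolC 𝒟) ρ K) (optImprint (BoolC 𝒟) ρ L)) := by
  intro r hr
  obtain ⟨FK, hFKfin, hFK, hoptK⟩ := exists_finite_rating_cclass_mem_optImprint hidem 𝒟 hρ K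
  obtain ⟨FL, hFLfin, hFL, hoptL⟩ := exists_finite_rating_cclass_mem_optImprint hidem 𝒟 hρ L
  let F : LClass A := insert K (insert L (FK ∪ FL))
  have hfin : F.Finite := ((hFKfin.union hFLfin).insert L).insert K
  have hF : F ⊆ 𝒟 := Set.insert_subset hK (Set.insert_subset hL (Set.union_subset hFK hFL))
  have hKF : K ∈ F := Or.inl rfl
  have hLF : L ∈ F := Or.inr (Or.inl rfl)
  have hFKF : FK ⊆ F := fun _ h => Or.inr (Or.inr (Or.inl h))
  have hFLF : FL ⊆ F := fun _ h => Or.inr (Or.inr (Or.inr h))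
  have hGfin : (catCupsets F).Finite :=
    (finite_range_cupset hfin).image2 _ (finite_range_cupset hfin)
  obtain ⟨_, ⟨_, ⟨u₀, hu₀, v₀, hv₀, rfl⟩, rfl⟩, hrw⟩ :=
    hr _ ((langBoolAlg_boolC 𝒟).isCCover_image_cclass hGfin
      ((hlat.catCupsets_subset hcat hfin hF).trans (subset_boolC 𝒟)) _)
  obtain ⟨u, v, hu, hv, hsub⟩ := exists_cclass_catCupsets_subset F u₀ v₀
  refine ⟨_, ⟨_, hoptK F hFKF u (hu K hKF hu₀), _, hoptL F hFLF v (hv L hLF hv₀), rfl⟩, ?_⟩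
  rw [← hmult.2]
  exact hrw.trans (hρ.mono hsub)

theorem optImprint_boolC_cat [Finite R] (hidem : ∀ r : R, r + r = r) {𝒟 : LClass A}
    (hlat : LangLattice 𝒟) (hqc : QuotientClosed 𝒟) (hreg : ∀ L ∈ 𝒟, RegularLang L)
    (hcat : ∀ K L : Lang A, K ∈ 𝒟 → L ∈ 𝒟 → cat K L ∈ 𝒟)
    (hρ : IsRatingMap ρ) (hmult : IsMultiplicative ρ) {K L : Lang A} (hK : K ∈ 𝒟) (hL : L ∈ 𝒟) :
    optImprint (BoolC 𝒟) ρ (cat K L) =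
      dclos (smul (optImprint (BoolC 𝒟) ρ K) (optImprint (BoolC 𝒟) ρ L)) := by
  refine (optImprint_boolC_cat_subset hidem hlat hcat hρ hmult hK hL).antisymm ?_
  rintro r ⟨_, ⟨s, hs, t, ht, rfl⟩, hr⟩
  exact mem_optImprint_of_rle hr (mul_mem_optImprint_cat (langBoolAlg_boolC 𝒟).1 hqc.boolC
    (fun _ => .of_mem_boolC hreg) hρ hmult hs ht)

end Concatenation

/-! ### Outer extensions -/

/-- The outer extension of `f` from the class `𝒟` to all languages: the value at `K` is the
intersection of the values of `f` at the members of `𝒟` that include `K`. Applied to the optimal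
imprint, it yields the rating map `τ`. -/
def outerExt (𝒟 : LClass A) (f : Lang A → Set R) (K : Lang A) : Set R :=
  {r | ∀ L ∈ 𝒟, K ⊆ L → r ∈ f L}

section OuterExtension

variable {𝒟 : LClass A} {f : Lang A → Set R}

theorem outerExt_mono (𝒟 : LClass A) (f : Lang A → Set R) : Monotone (outerExt 𝒟 f) :=
  fun _ _ h _ hr L hL hKL => hr L hL (h.trans hKL)

theorem outerExt_subset {K L : Lang A} (hL : L ∈ 𝒟) (h : K ⊆ L) : outerExt 𝒟 f K ⊆ f L :=
  fun _ hr => hr L hL h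

theorem outerExt_eq_of_mem (hf : Monotone f) {K : Lang A} (hK : K ∈ 𝒟) :
    outerExt 𝒟 f K = f K :=
  (outerExt_subset hK subset_rfl).antisymm fun _ hr _ _ h => hf h hr

theorem outerExt_union (hunion : ∀ K L : Lang A, K ∈ 𝒟 → L ∈ 𝒟 → K ∪ L ∈ 𝒟)
    (hf : ∀ K L : Lang A, f (K ∪ L) ⊆ f K ∪ f L) (K L : Lang A) :
    outerExt 𝒟 f (K ∪ L) = outerExt 𝒟 f K ∪ outerExt 𝒟 f L := by
  refine Set.Subset.antisymm (fun r hr => ?_) (Set.union_subset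
    (outerExt_mono 𝒟 f Set.subset_union_left) (outerExt_mono 𝒟 f Set.subset_union_right))
  by_contra! hne
  simp only [Set.mem_union, not_or, outerExt, Set.mem_ofPred_eq, not_forall] at hne
  obtain ⟨⟨K', hK', hKK', hrK'⟩, L', hL', hLL', hrL'⟩ := hne
  exact (hf K' L' (hr _ (hunion K' L' hK' hL') (Set.union_subset_union hKK' hLL'))).elim
    hrK' hrL'

theorem exists_mem_subset_outerExt [Finite R] (hlat : LangLattice 𝒟) (hf : Monotone f)
    (K : Lang A) : ∃ L ∈ 𝒟, K ⊆ L ∧ f L ⊆ outerExt 𝒟 f K := by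
  have hsep (r : R) : ∃ L ∈ 𝒟, K ⊆ L ∧ (r ∈ f L → r ∈ outerExt 𝒟 f K) := by
    by_cases hr : r ∈ outerExt 𝒟 f K
    · exact ⟨Set.univ, hlat.2.1, Set.subset_univ _, fun _ => hr⟩
    · obtain ⟨L, hL, hKL, hrL⟩ := by
        simpa only [outerExt, Set.mem_ofPred_eq, not_forall] using hr
      exact ⟨L, hL, hKL, fun h => absurd h hrL⟩
  choose L hL hKL hsep using hsep
  exact ⟨⋂₀ Set.range L, hlat.sInter_mem (Set.finite_range L) (Set.range_subset_iff.2 hL),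
    Set.subset_sInter (Set.forall_mem_range.2 hKL),
    fun r hr => hsep r (hf (Set.sInter_subset_of_mem (Set.mem_range_self r)) hr)⟩

theorem outerExt_cat [Add R] [Mul R] [Finite R] (hlat : LangLattice 𝒟) (hqc : QuotientClosed 𝒟)
    (hreg : ∀ L ∈ 𝒟, RegularLang L) (hcat : ∀ K L : Lang A, K ∈ 𝒟 → L ∈ 𝒟 → cat K L ∈ 𝒟)
    (hf : Monotone f)
    (hfcat : ∀ K L : Lang A, K ∈ 𝒟 → L ∈ 𝒟 → f (cat K L) = dclos (smul (f K) (f L)))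
    (K₁ K₂ : Lang A) :
    outerExt 𝒟 f (cat K₁ K₂) = dclos (smul (outerExt 𝒟 f K₁) (outerExt 𝒟 f K₂)) := by
  apply Set.Subset.antisymm
  · obtain ⟨L₁, hL₁, hKL₁, hf₁⟩ := exists_mem_subset_outerExt hlat hf K₁
    obtain ⟨L₂, hL₂, hKL₂, hf₂⟩ := exists_mem_subset_outerExt hlat hf K₂
    calc outerExt 𝒟 f (cat K₁ K₂)
        ⊆ f (cat L₁ L₂) := outerExt_subset (hcat _ _ hL₁ hL₂) (Set.image2_subset hKL₁ hKL₂)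
      _ = dclos (smul (f L₁) (f L₂)) := hfcat _ _ hL₁ hL₂
      _ ⊆ dclos (smul (outerExt 𝒟 f K₁) (outerExt 𝒟 f K₂)) :=
        dclos_mono (Set.image2_subset hf₁ hf₂)
  · intro r hr L hL hKL
    obtain ⟨H₁, hH₁, H₂, hH₂, hKH₁, hKH₂, hHL⟩ :=
      exists_mem_cat_subset hlat hqc hL (hreg L hL) hKL
    apply hf hHL
    rw [hfcat _ _ hH₁ hH₂]
    exact dclos_mono (Set.image2_subset (outerExt_subset hH₁ hKH₁) (outerExt_subset hH₂ hKH₂)) hr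

end OuterExtension

theorem statement14_general {A R : Type} [Semiring R] [Finite R]
    (hidem : ∀ r : R, r + r = r)
    (𝒟 : LClass A) (hlat : LangLattice 𝒟) (hqc : QuotientClosed 𝒟)
    (hreg : ∀ L ∈ 𝒟, RegularLang L)
    (hcat : ∀ K L : Lang A, K ∈ 𝒟 → L ∈ 𝒟 → cat K L ∈ 𝒟)
    (ρ : Lang A → R) (hρ : IsRatingMap ρ) (hmult : IsMultiplicative ρ) :
    ∃ τ : Lang A → Set R,
      (τ ∅ = ∅ ∧ ∀ K L : Lang A, τ (K ∪ L) = τ K ∪ τ L) ∧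
      ((∀ T U V : Set R,
          dclos (smul T (smul (dclos U) V)) = dclos (smul T (smul U V))) ∧
        ∀ K₁ K₂ : Lang A, τ (cat K₁ K₂) = dclos (smul (τ K₁) (τ K₂))) ∧
      (∀ K ∈ 𝒟, τ K = optImprint (BoolC 𝒟) ρ K) := by
  have hmono := optImprint_mono (BoolC 𝒟) ρ
  refine ⟨outerExt 𝒟 (optImprint (BoolC 𝒟) ρ), ⟨?_, ?_⟩,
    ⟨dclos_smul_smul_dclos hidem, ?_⟩, fun K hK => outerExt_eq_of_mem hmono hK⟩
  · rw [outerExt_eq_of_mem hmono hlat.1, optImprint_empty]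
  · exact outerExt_union hlat.2.2.1 (optImprint_union_subset (BoolC 𝒟) ρ)
  · exact outerExt_cat hlat hqc hreg hcat hmono
      fun _ _ => optImprint_boolC_cat hidem hlat hqc hreg hcat hρ hmult

/-- For a quotient-closed lattice `𝒟` of regular languages
closed under concatenation and a multiplicative rating map `ρ`, there is a
rating map `τ : 2^{A*} → 2^R` which is quasi-multiplicative for the downset
endomorphism `U ↦ ↓_R U` and coincides with `K ↦ I_{Bool(𝒟)}[K, ρ]` on `𝒟`. -/
theorem statement14 {A R : Type} [Fintype A] [Semiring R] [Finite R]
    (hidem : ∀ r : R, r + r = r)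
    (𝒟 : LClass A) (hlat : LangLattice 𝒟) (hqc : QuotientClosed 𝒟)
    (hreg : ∀ L ∈ 𝒟, RegularLang L)
    (hcat : ∀ K L : Lang A, K ∈ 𝒟 → L ∈ 𝒟 → cat K L ∈ 𝒟)
    (ρ : Lang A → R) (hρ : IsRatingMap ρ) (hmult : IsMultiplicative ρ) :
    ∃ τ : Lang A → Set R,
      (τ ∅ = ∅ ∧ ∀ K L : Lang A, τ (K ∪ L) = τ K ∪ τ L) ∧
      ((∀ T U V : Set R,
          dclos (smul T (smul (dclos U) V)) = dclos (smul T (smul U V))) ∧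
        ∀ K₁ K₂ : Lang A, τ (cat K₁ K₂) = dclos (smul (τ K₁) (τ K₂))) ∧
      (∀ K ∈ 𝒟, τ K = optImprint (BoolC 𝒟) ρ K) := by
  exact statement14_general hidem 𝒟 hlat hqc hreg hcat ρ hρ hmult

end Paper
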